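/- arXiv:math/0601293 — 4 statements merged into one kernel-verified Lean document; each statement's English description precedes it below -/
import Mathlib

section
/- There is an absolute constant c > 0 such that for every integer Δ ≥ 3 there exists N(Δ) such that for all n ≥ N(Δ) with Δ·n even, there exists a simple Δ-regular graph G on n vertices whose queue-number is at least c·√Δ·n^(1/2 − 1/Δ). -/
/-!
The proof compares two counts, with `c = 1 / 45`; let `m = Δ n / 2` be the number of edges.

*Few graphs have a `k`-queue layout.* In a queue, an edge with a larger left end has a weakly larger
right end. Tagging both ends of every edge with its queue, and letting the tag dominate in a
lexicographic order, makes this true for all edges of a `k`-queue layout at once. A monotone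
collection of pairs is recovered from its two marginals by sorting both and zipping them. So, given
the vertex ordering, the graph is determined by two multisets of size `m` in a set of size `k n`,
and there are at most `n! * multichoose (k n) m ^ 2 ≤ n ^ n * (9 k / Δ) ^ (2 m)` such graphs when
`k ≥ Δ`.

*There are many regular graphs.* The complete bipartite graph `K_{Δ,Δ}` has `(s!) ^ (Δ ^ 2)` lifts
with fibres of size `s`, and a fixed `Δ`-regular graph on the at most `5 Δ` remaining vertices
completes each of them to `n` vertices. This gives at least `(n / (12 Δ)) ^ m / n ^ (3 Δ ^ 2)`
graphs.

If `k ≤ c √Δ n ^ (1/2 - 1/Δ)`, the first bound is at most `(n / (25 Δ)) ^ m`, which is eventually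
smaller than the second.
-/

/-- The simple graph `G` on `n` vertices admits a `k`-queue layout: there is a
vertex ordering (a permutation `σ` of `Fin n`) and an assignment of the edges to
`k` queues such that no two edges in the same queue are nested, where edges
`{v,w}` and `{x,y}` are nested if, in the ordering, the left endpoint of one is
strictly between the endpoints of the other and likewise for the right endpoint. -/
def HasKQueueLayout (n : ℕ) (G : SimpleGraph (Fin n)) (k : ℕ) : Prop :=
  ∃ σ : Fin n ≃ Fin n, ∃ q : Sym2 (Fin n) → Fin k,
    ∀ v w x y : Fin n, G.Adj v w → G.Adj x y → q s(v, w) = q s(x, y) →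
      ¬ (min (σ v) (σ w) < min (σ x) (σ y) ∧ max (σ x) (σ y) < max (σ v) (σ w))

section MonotonePairs

variable {α β : Type*} [LinearOrder α] [LinearOrder β]

theorem exists_sortedLE_of_monovaryOn {M : Multiset (α × β)}
    (hM : MonovaryOn Prod.snd Prod.fst {p | p ∈ M}) :
    ∃ l : List (α × β), (l : Multiset (α × β)) = M ∧
      (l.map Prod.fst).SortedLE ∧ (l.map Prod.snd).SortedLE := by
  set L : List (α ×ₗ β) := (M.map toLex).sort with hL
  have hmem {x : α ×ₗ β} (hx : x ∈ L) : ofLex x ∈ M := by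
    obtain ⟨p, hp, rfl⟩ := Multiset.mem_map.1 ((Multiset.mem_sort _).1 hx)
    exact hp
  have hsort : L.Pairwise (· ≤ ·) := Multiset.pairwise_sort _ _
  refine ⟨L.map ofLex, ?_, ?_, ?_⟩
  · rw [← Multiset.map_coe, hL, Multiset.sort_eq, Multiset.map_map]
    exact Multiset.map_id _
  · rw [List.map_map]
    exact (hsort.map _ fun x y hxy ↦ Prod.Lex.monotone_fst x y hxy).sortedLE
  · rw [List.map_map]
    refine List.Pairwise.sortedLE (List.pairwise_map.2 (hsort.imp_of_mem fun hx hy hxy ↦ ?_))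
    rcases Prod.Lex.le_iff.1 hxy with hlt | ⟨-, hle⟩
    · exact hM (hmem hx) (hmem hy) hlt
    · exact hle

theorem eq_of_monovaryOn_of_map_fst_eq_of_map_snd_eq {M N : Multiset (α × β)}
    (hM : MonovaryOn Prod.snd Prod.fst {p | p ∈ M})
    (hN : MonovaryOn Prod.snd Prod.fst {p | p ∈ N})
    (hfst : M.map Prod.fst = N.map Prod.fst) (hsnd : M.map Prod.snd = N.map Prod.snd) :
    M = N := by
  obtain ⟨l, rfl, hlfst, hlsnd⟩ := exists_sortedLE_of_monovaryOn hM
  obtain ⟨l', rfl, hlfst', hlsnd'⟩ := exists_sortedLE_of_monovaryOn hN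
  have hfst' : l.map Prod.fst = l'.map Prod.fst :=
    List.Perm.eq_of_sortedLE hlfst hlfst' (Multiset.coe_eq_coe.1 hfst)
  have hsnd' : l.map Prod.snd = l'.map Prod.snd :=
    List.Perm.eq_of_sortedLE hlsnd hlsnd' (Multiset.coe_eq_coe.1 hsnd)
  exact congrArg _ ((List.zip_of_prod hfst' hsnd').trans (List.zip_of_prod rfl rfl).symm)

end MonotonePairs

section QueueEnds

variable {V W κ : Type*} [LinearOrder W]

/-- The left end of the edge `e` in the vertex ordering `σ`, tagged with the queue `q e`. The tag is
the more significant coordinate: this lists the queues one after another, so that a layout with many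
queues yields a single monotone relation between left and right ends. -/
def leftEnd (σ : V → W) (q : Sym2 V → κ) (e : Sym2 V) : κ ×ₗ W := toLex (q e, (e.map σ).inf)

/-- The right end of the edge `e` in the vertex ordering `σ`, tagged with the queue `q e` as in
`leftEnd`. -/
def rightEnd (σ : V → W) (q : Sym2 V → κ) (e : Sym2 V) : κ ×ₗ W := toLex (q e, (e.map σ).sup)

theorem eq_of_leftEnd_eq_of_rightEnd_eq {σ : V → W} (hσ : σ.Injective) {q q' : Sym2 V → κ}
    {e e' : Sym2 V} (hl : leftEnd σ q e = leftEnd σ q' e')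
    (hr : rightEnd σ q e = rightEnd σ q' e') : e = e' :=
  Sym2.map.injective hσ <| Sym2.inf_eq_inf_and_sup_eq_sup.1
    ⟨congrArg (fun p ↦ (ofLex p).2) hl, congrArg (fun p ↦ (ofLex p).2) hr⟩

variable [LinearOrder κ]

theorem monovaryOn_rightEnd_leftEnd {σ : V → W} {q : Sym2 V → κ} {E : Set (Sym2 V)}
    (hE : ∀ e ∈ E, ∀ f ∈ E, q e = q f →
      ¬((e.map σ).inf < (f.map σ).inf ∧ (f.map σ).sup < (e.map σ).sup)) :
    MonovaryOn (rightEnd σ q) (leftEnd σ q) E := by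
  intro e he f hf hef
  rcases Prod.Lex.lt_iff.1 hef with hlt | ⟨heq, hlt⟩
  · exact Prod.Lex.le_iff.2 (.inl hlt)
  · exact Prod.Lex.le_iff.2 (.inr ⟨heq, not_lt.1 fun h ↦ hE e he f hf heq ⟨hlt, h⟩⟩)

theorem eq_of_map_leftEnd_eq_of_map_rightEnd_eq {σ : V → W} (hσ : σ.Injective)
    {q q' : Sym2 V → κ} {E E' : Finset (Sym2 V)}
    (hE : MonovaryOn (rightEnd σ q) (leftEnd σ q) E)
    (hE' : MonovaryOn (rightEnd σ q') (leftEnd σ q') E')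
    (hl : E.val.map (leftEnd σ q) = E'.val.map (leftEnd σ q'))
    (hr : E.val.map (rightEnd σ q) = E'.val.map (rightEnd σ q')) : E = E' := by
  let ends (p : Sym2 V → κ) (e : Sym2 V) : (κ ×ₗ W) × (κ ×ₗ W) := (leftEnd σ p e, rightEnd σ p e)
  have hmono {p : Sym2 V → κ} {F : Finset (Sym2 V)}
      (hF : MonovaryOn (rightEnd σ p) (leftEnd σ p) F) :
      MonovaryOn Prod.snd Prod.fst {x | x ∈ F.val.map (ends p)} := by
    intro x hx y hy hxy
    obtain ⟨e, he, rfl⟩ := Multiset.mem_map.1 hx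
    obtain ⟨f, hf, rfl⟩ := Multiset.mem_map.1 hy
    exact hF he hf hxy
  have hends : E.val.map (ends q) = E'.val.map (ends q') :=
    eq_of_monovaryOn_of_map_fst_eq_of_map_snd_eq (hmono hE) (hmono hE')
      (by simpa only [Multiset.map_map] using! hl) (by simpa only [Multiset.map_map] using! hr)
  have hsub {p p' : Sym2 V → κ} {F F' : Finset (Sym2 V)}
      (h : F.val.map (ends p) = F'.val.map (ends p')) : F ⊆ F' := by
    intro e he
    obtain ⟨e', he', hee'⟩ := Multiset.mem_map.1 (h ▸ Multiset.mem_map_of_mem (ends p) he)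
    obtain ⟨hl, hr⟩ := Prod.ext_iff.1 hee'
    exact eq_of_leftEnd_eq_of_rightEnd_eq hσ hl hr ▸ he'
  exact (hsub hends).antisymm (hsub hends.symm)

end QueueEnds

theorem HasKQueueLayout.mono {n k l : ℕ} {G : SimpleGraph (Fin n)} (h : HasKQueueLayout n G k)
    (hkl : k ≤ l) : HasKQueueLayout n G l := by
  obtain ⟨σ, q, hq⟩ := h
  exact ⟨σ, fun e ↦ Fin.castLE hkl (q e),
    fun v w x y hvw hxy heq ↦ hq v w x y hvw hxy (Fin.castLE_injective hkl heq)⟩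

theorem HasKQueueLayout.exists_monovaryOn {n k : ℕ} {G : SimpleGraph (Fin n)}
    (h : HasKQueueLayout n G k) :
    ∃ (σ : Equiv.Perm (Fin n)) (q : Sym2 (Fin n) → Fin k),
      MonovaryOn (rightEnd σ q) (leftEnd σ q) G.edgeSet := by
  obtain ⟨σ, q, hq⟩ := h
  refine ⟨σ, q, monovaryOn_rightEnd_leftEnd ?_⟩
  rintro ⟨v, w⟩ hvw ⟨x, y⟩ hxy
  exact hq v w x y hvw hxy

open Classical in
theorem ncard_setOf_hasKQueueLayout_le (n m k : ℕ) :
    {G : SimpleGraph (Fin n) | G.edgeSet.ncard = m ∧ HasKQueueLayout n G k}.ncard ≤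
      n.factorial * (k * n).multichoose m ^ 2 := by
  set 𝒢 := {G : SimpleGraph (Fin n) | G.edgeSet.ncard = m ∧ HasKQueueLayout n G k}
  choose σ q hσq using fun G : 𝒢 ↦ G.2.2.exists_monovaryOn
  have hcard (G : 𝒢) : G.1.edgeFinset.val.card = m := by
    rw [← G.2.1, Set.ncard_eq_toFinset_card']
    rfl
  let encode (G : 𝒢) :
      Equiv.Perm (Fin n) × Sym (Fin k ×ₗ Fin n) m × Sym (Fin k ×ₗ Fin n) m :=
    (σ G, ⟨G.1.edgeFinset.val.map (leftEnd (σ G) (q G)), by rw [Multiset.card_map, hcard]⟩,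
      ⟨G.1.edgeFinset.val.map (rightEnd (σ G) (q G)), by rw [Multiset.card_map, hcard]⟩)
  have hencode : encode.Injective := by
    intro G H hGH
    obtain ⟨hσ, hlr⟩ := Prod.ext_iff.1 hGH
    obtain ⟨hl, hr⟩ := Prod.ext_iff.1 hlr
    have hG := hσq G
    have hH := hσq H
    have hl' := congrArg Subtype.val hl
    have hr' := congrArg Subtype.val hr
    simp only [encode] at hσ hl' hr'
    rw [← hσ] at hl' hr' hH
    apply Subtype.ext
    apply SimpleGraph.edgeFinset_inj.1
    refine eq_of_map_leftEnd_eq_of_map_rightEnd_eq (σ G).injective ?_ ?_ hl' hr'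
    · simpa using hG
    · simpa using hH
  calc 𝒢.ncard = Fintype.card 𝒢 := by rw [← Nat.card_coe_set_eq, Nat.card_eq_fintype_card]
    _ ≤ _ := Fintype.card_le_of_injective encode hencode
    _ = n.factorial * (k * n).multichoose m ^ 2 := by
      simp [Fintype.card_perm, Sym.card_sym_eq_multichoose, sq]

/-- The `d`-regular graphs on `V`, with degrees measured by `Set.ncard` so that no finiteness or
decidability is required; on an infinite `V` and for `d = 0` this also admits infinite degrees. -/
def regularGraphs (V : Type*) (d : ℕ) : Set (SimpleGraph V) :=
  {G | ∀ v, (G.neighborSet v).ncard = d}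

section RegularGraphs

variable {V W : Type*} {d : ℕ}

open Classical in
theorem two_mul_ncard_edgeSet_of_mem_regularGraphs [Finite V] {G : SimpleGraph V}
    (hG : G ∈ regularGraphs V d) : 2 * G.edgeSet.ncard = d * Nat.card V := by
  have := Fintype.ofFinite V
  have hdeg (v : V) : G.degree v = d := by
    rw [← hG v, ← Nat.card_coe_set_eq, Nat.card_eq_fintype_card, G.card_neighborSet_eq_degree]
  rw [← G.coe_edgeFinset, Set.ncard_coe_finset, ← G.sum_degrees_eq_twice_card_edges]
  simp only [hdeg, Finset.sum_const, Finset.card_univ, smul_eq_mul, Nat.card_eq_fintype_card,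
    mul_comm]

theorem comap_mem_regularGraphs_iff (e : V ≃ W) {G : SimpleGraph W} :
    G.comap e ∈ regularGraphs V d ↔ G ∈ regularGraphs W d := by
  have hdeg (v : V) : ((G.comap e).neighborSet v).ncard = (G.neighborSet (e v)).ncard :=
    Set.ncard_congr' (e.subtypeEquiv fun _ ↦ Iff.rfl)
  exact (forall_congr' fun v ↦ by rw [hdeg]).trans e.forall_congr_right

theorem sum_mem_regularGraphs {G : SimpleGraph V} {H : SimpleGraph W}
    (hG : G ∈ regularGraphs V d) (hH : H ∈ regularGraphs W d) :
    G ⊕g H ∈ regularGraphs (V ⊕ W) d := by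
  rintro (v | w)
  · have : (G ⊕g H).neighborSet (.inl v) = .inl '' G.neighborSet v := by ext (x | y) <;> simp
    rw [this, Set.ncard_image_of_injective _ Sum.inl_injective, hG v]
  · have : (G ⊕g H).neighborSet (.inr w) = .inr '' H.neighborSet w := by ext (x | y) <;> simp
    rw [this, Set.ncard_image_of_injective _ Sum.inr_injective, hH w]

theorem sum_left_injective (H : SimpleGraph W) :
    Function.Injective fun G : SimpleGraph V ↦ G ⊕g H := by
  intro G G' h
  ext v w
  exact iff_of_eq (congrArg (fun K : SimpleGraph (V ⊕ W) ↦ K.Adj (.inl v) (.inl w)) h)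

theorem ncard_regularGraphs_le_ncard_sum [Finite V] [Finite W]
    (hW : (regularGraphs W d).Nonempty) :
    (regularGraphs V d).ncard ≤ (regularGraphs (V ⊕ W) d).ncard := by
  obtain ⟨H, hH⟩ := hW
  exact Set.ncard_le_ncard_of_injOn (· ⊕g H) (fun G hG ↦ sum_mem_regularGraphs hG hH)
    (sum_left_injective H).injOn

theorem ncard_regularGraphs_congr (e : V ≃ W) :
    (regularGraphs V d).ncard = (regularGraphs W d).ncard :=
  Set.ncard_congr' (e.simpleGraph.subtypeEquiv fun _ ↦ (comap_mem_regularGraphs_iff e.symm).symm)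

theorem top_mem_regularGraphs (hV : Nat.card V = d + 1) : ⊤ ∈ regularGraphs V d := by
  have := Nat.finite_of_card_ne_zero (hV.trans_ne d.succ_ne_zero)
  intro v
  rw [SimpleGraph.neighborSet_top, Set.ncard_compl, Set.ncard_singleton, hV, Nat.add_sub_cancel]

end RegularGraphs

section Bipartite

variable {A B : Type*} {d : ℕ}

/-- The bipartite graph with parts `A` and `B` whose edges are the pairs related by `R`. -/
def bipartiteOfRel (R : A → B → Prop) : SimpleGraph (A ⊕ B) where
  Adj
    | .inl a, .inr b => R a b
    | .inr b, .inl a => R a b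
    | _, _ => False
  symm := ⟨by rintro (a | b) (a' | b') <;> exact id⟩
  loopless := ⟨by rintro (a | b) <;> exact id⟩

theorem bipartiteOfRel_injective :
    Function.Injective (bipartiteOfRel : (A → B → Prop) → SimpleGraph (A ⊕ B)) := by
  intro R R' h
  ext a b
  exact iff_of_eq (congrArg (fun G : SimpleGraph (A ⊕ B) ↦ G.Adj (.inl a) (.inr b)) h)

theorem bipartiteOfRel_mem_regularGraphs {R : A → B → Prop} (hA : ∀ a, {b | R a b}.ncard = d)
    (hB : ∀ b, {a | R a b}.ncard = d) : bipartiteOfRel R ∈ regularGraphs (A ⊕ B) d := by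
  rintro (a | b)
  · have : (bipartiteOfRel R).neighborSet (.inl a) = .inr '' {b | R a b} := by
      ext (x | y) <;> simp [bipartiteOfRel]
    rw [this, Set.ncard_image_of_injective _ Sum.inr_injective, hA a]
  · have : (bipartiteOfRel R).neighborSet (.inr b) = .inl '' {a | R a b} := by
      ext (x | y) <;> simp [bipartiteOfRel]
    rw [this, Set.ncard_image_of_injective _ Sum.inl_injective, hB b]

theorem bipartiteOfRel_sub_mem_regularGraphs [AddGroup A] (T : Set A) :
    bipartiteOfRel (fun a b : A ↦ b - a ∈ T) ∈ regularGraphs (A ⊕ A) T.ncard :=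
  bipartiteOfRel_mem_regularGraphs
    (fun a ↦ Set.ncard_congr' ((Equiv.subRight a).subtypeEquiv fun _ ↦ Iff.rfl))
    (fun b ↦ Set.ncard_congr' ((Equiv.subLeft b).subtypeEquiv fun _ ↦ Iff.rfl))

end Bipartite

section Lift

variable {ι S : Type*}

/-- The bipartite relation of the lift of the complete bipartite graph `K_{ι,ι}` with fibre `S`, in
which the edge between `i` and `j` is replaced by the perfect matching of fibres `π i j`. -/
def liftRel (π : ι → ι → Equiv.Perm S) (x y : ι × S) : Prop := π x.1 y.1 x.2 = y.2

theorem liftRel_injective :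
    Function.Injective (liftRel : (ι → ι → Equiv.Perm S) → ι × S → ι × S → Prop) := by
  intro π π' h
  ext i j s
  have hrel : liftRel π (i, s) (j, π' i j s) := by rw [h]; exact rfl
  exact hrel

theorem ncard_setOf_liftRel_left (π : ι → ι → Equiv.Perm S) (x : ι × S) :
    {y | liftRel π x y}.ncard = Nat.card ι := by
  have : {y | liftRel π x y} = Set.univ.graphOn fun j ↦ π x.1 j x.2 := by
    ext y; simp [liftRel]
  rw [this, Set.ncard_graphOn, Set.ncard_univ]

theorem ncard_setOf_liftRel_right (π : ι → ι → Equiv.Perm S) (y : ι × S) :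
    {x | liftRel π x y}.ncard = Nat.card ι := by
  have : {x | liftRel π x y} = Set.univ.graphOn fun i ↦ (π i y.1).symm y.2 := by
    ext x; simp [liftRel, Equiv.symm_apply_eq, @eq_comm _ y.2]
  rw [this, Set.ncard_graphOn, Set.ncard_univ]

theorem factorial_pow_le_ncard_regularGraphs [Finite ι] [Finite S] :
    (Nat.card S).factorial ^ (Nat.card ι * Nat.card ι) ≤
      (regularGraphs (ι × S ⊕ ι × S) (Nat.card ι)).ncard := by
  calc (Nat.card S).factorial ^ (Nat.card ι * Nat.card ι)
      = Nat.card (ι → ι → Equiv.Perm S) := by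
        simp only [Nat.card_fun, Nat.card_perm, pow_mul]
    _ = (Set.univ : Set (ι → ι → Equiv.Perm S)).ncard := (Set.ncard_univ _).symm
    _ ≤ _ := Set.ncard_le_ncard_of_injOn (fun π ↦ bipartiteOfRel (liftRel π))
        (fun π _ ↦ bipartiteOfRel_mem_regularGraphs (ncard_setOf_liftRel_left π)
          (ncard_setOf_liftRel_right π))
        (bipartiteOfRel_injective.comp liftRel_injective).injOn

end Lift

theorem regularGraphs_fin_sum_fin_nonempty {d p : ℕ} (hdp : d ≤ p) :
    (regularGraphs (Fin p ⊕ Fin p) d).Nonempty := by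
  rcases p.eq_zero_or_pos with rfl | hp
  · exact ⟨⊥, fun v ↦ isEmptyElim v⟩
  have : NeZero p := ⟨hp.ne'⟩
  obtain ⟨T, -, rfl⟩ := Finset.exists_subset_card_eq (s := (Finset.univ : Finset (Fin p)))
    (by simpa using hdp)
  rw [← Set.ncard_coe_finset]
  exact ⟨_, bipartiteOfRel_sub_mem_regularGraphs (T : Set (Fin p))⟩

theorem regularGraphs_fin_nonempty {d r : ℕ} (hr : 3 * d < r) (he : Even (d * r)) :
    (regularGraphs (Fin r) d).Nonempty := by
  rcases r.even_or_odd' with ⟨p, rfl | rfl⟩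
  · obtain ⟨G, hG⟩ := regularGraphs_fin_sum_fin_nonempty (show d ≤ p by omega)
    exact ⟨_, (comap_mem_regularGraphs_iff
      (Fintype.equivOfCardEq (by simp [two_mul]) : Fin (2 * p) ≃ _)).2 hG⟩
  · obtain ⟨t, rfl⟩ : Even d := by grind
    obtain ⟨G, hG⟩ := regularGraphs_fin_sum_fin_nonempty (show t + t ≤ p - t by omega)
    have hK : ⊤ ∈ regularGraphs (Fin (t + t + 1)) (t + t) := top_mem_regularGraphs (by simp)
    have hcard : Fintype.card (Fin (2 * p + 1)) =
        Fintype.card (Fin (t + t + 1) ⊕ (Fin (p - t) ⊕ Fin (p - t))) := by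
      simp only [Fintype.card_sum, Fintype.card_fin]
      omega
    exact ⟨_, (comap_mem_regularGraphs_iff (Fintype.equivOfCardEq hcard)).2
      (sum_mem_regularGraphs hK hG)⟩

theorem factorial_pow_le_ncard_regularGraphs_fin {d s r n : ℕ} (hn : 2 * (d * s) + r = n)
    (hr : 3 * d < r) (he : Even (d * n)) :
    s.factorial ^ (d * d) ≤ (regularGraphs (Fin n) d).ncard := by
  have her : Even (d * r) := by grind
  have hcard : Fintype.card ((Fin d × Fin s ⊕ Fin d × Fin s) ⊕ Fin r) = n := by
    simp only [Fintype.card_sum, Fintype.card_prod, Fintype.card_fin]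
    omega
  calc s.factorial ^ (d * d)
    _ ≤ (regularGraphs (Fin d × Fin s ⊕ Fin d × Fin s) d).ncard := by
        simpa only [Nat.card_fin] using
          factorial_pow_le_ncard_regularGraphs (ι := Fin d) (S := Fin s)
    _ ≤ (regularGraphs ((Fin d × Fin s ⊕ Fin d × Fin s) ⊕ Fin r) d).ncard :=
        ncard_regularGraphs_le_ncard_sum (regularGraphs_fin_nonempty hr her)
    _ = (regularGraphs (Fin n) d).ncard :=
        ncard_regularGraphs_congr (Fintype.equivFinOfCardEq hcard)

theorem div_three_pow_le_factorial (n : ℕ) : (n / 3 : ℝ) ^ n ≤ n.factorial := by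
  have hexp : Real.exp n ≤ 3 ^ n := by
    rw [← Real.exp_one_pow]
    exact pow_le_pow_left₀ (Real.exp_pos 1).le Real.exp_one_lt_three.le n
  have hdiv := (Real.pow_div_factorial_le_exp (n : ℝ) n.cast_nonneg n).trans hexp
  rw [div_le_iff₀ (by positivity)] at hdiv
  rwa [div_pow, div_le_iff₀ (by positivity), mul_comm]

theorem multichoose_le_pow (a m : ℕ) : (a.multichoose m : ℝ) ≤ ((a + m) / (m / 3)) ^ m := by
  rcases m.eq_zero_or_pos with rfl | hm
  · simp
  calc (a.multichoose m : ℝ)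
      ≤ ((a + m - 1 : ℕ) : ℝ) ^ m / m.factorial := by
        rw [Nat.multichoose_eq]
        exact Nat.choose_le_pow_div m _
    _ ≤ (a + m : ℝ) ^ m / (m / 3) ^ m := by
        gcongr
        · exact_mod_cast Nat.sub_le (a + m) 1
        · exact div_three_pow_le_factorial m
    _ = _ := (div_pow _ _ m).symm

theorem ncard_setOf_hasKQueueLayout_le_pow {d n m k : ℕ} (hd : 0 < d) (hm : d * n = 2 * m)
    (hdk : d ≤ k) :
    ({G : SimpleGraph (Fin n) | G.edgeSet.ncard = m ∧ HasKQueueLayout n G k}.ncard : ℝ) ≤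
      n ^ n * (9 * k / d) ^ (2 * m) := by
  have hmultichoose : ((k * n).multichoose m : ℝ) ≤ (9 * k / d) ^ m := by
    refine (multichoose_le_pow _ m).trans (pow_le_pow_left₀ (by positivity) ?_ m)
    refine div_le_of_le_mul₀ (by positivity) (by positivity) ?_
    have hn : (n : ℝ) = 2 * m / d := by
      rw [eq_div_iff (by positivity), mul_comm]
      exact_mod_cast hm
    have hone : (1 : ℝ) ≤ k / d := (one_le_div (by positivity)).2 (by exact_mod_cast hdk)
    calc ((k * n : ℕ) + m : ℝ) = 2 * (k / d) * m + 1 * m := by push_cast; rw [hn]; ring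
      _ ≤ 2 * (k / d) * m + k / d * m := by gcongr
      _ = 9 * k / d * (m / 3) := by ring
  calc _ ≤ ((n.factorial * (k * n).multichoose m ^ 2 : ℕ) : ℝ) := by
        exact_mod_cast ncard_setOf_hasKQueueLayout_le n m k
    _ ≤ n ^ n * ((9 * k / d) ^ m) ^ 2 := by
        push_cast
        gcongr
        exact_mod_cast n.factorial_le_pow
    _ = _ := by rw [← pow_mul, mul_comm m]

-- The factor `n ^ (3 * d ^ 2)` pays for the at most `3 * d ^ 2` edges of the fixed graph on the `r`
-- leftover vertices.
theorem div_pow_le_mul_ncard_regularGraphs {d n m : ℕ} (hd : 0 < d) (hdn : 10 * d ≤ n)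
    (hm : d * n = 2 * m) :
    (n / (12 * d) : ℝ) ^ m ≤ n ^ (3 * d ^ 2) * (regularGraphs (Fin n) d).ncard := by
  obtain ⟨s, r, hsr, hr, hr'⟩ : ∃ s r, 2 * (d * s) + r = n ∧ 3 * d < r ∧ r ≤ 5 * d := by
    have hmod := Nat.mod_lt (n - (3 * d + 1)) (show 0 < 2 * d by omega)
    have hdiv := Nat.div_add_mod (n - (3 * d + 1)) (2 * d)
    refine ⟨(n - (3 * d + 1)) / (2 * d), (n - (3 * d + 1)) % (2 * d) + (3 * d + 1), ?_⟩
    rw [← mul_assoc]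
    omega
  obtain ⟨w, rfl⟩ : ∃ w, m = s * (d * d) + w := Nat.exists_eq_add_of_le (by nlinarith)
  have hw : w ≤ 3 * d ^ 2 := by nlinarith
  have hn : (1 : ℝ) ≤ n := by exact_mod_cast (by omega : 1 ≤ n)
  have hle_n : (n / (12 * d) : ℝ) ≤ n :=
    div_le_self n.cast_nonneg (by exact_mod_cast (by omega : 1 ≤ 12 * d))
  have hle_s : (n / (12 * d) : ℝ) ≤ s / 3 := by
    have : (n : ℝ) ≤ 4 * (d * s) := by exact_mod_cast (by omega : n ≤ 4 * (d * s))
    rw [div_le_div_iff₀ (by positivity) (by norm_num)]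
    linarith
  calc (n / (12 * d) : ℝ) ^ (s * (d * d) + w)
      = (n / (12 * d)) ^ w * ((n / (12 * d)) ^ s) ^ (d * d) := by rw [add_comm, pow_add, pow_mul]
    _ ≤ n ^ w * ((s / 3) ^ s) ^ (d * d) := by gcongr
    _ ≤ n ^ (3 * d ^ 2) * (s.factorial : ℝ) ^ (d * d) := by
        gcongr
        exact div_three_pow_le_factorial s
    _ ≤ n ^ (3 * d ^ 2) * (regularGraphs (Fin n) d).ncard := by
        gcongr
        exact_mod_cast factorial_pow_le_ncard_regularGraphs_fin hsr hr (hm ▸ even_two_mul _)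

-- The exponent `1 / 2 - 1 / d` is chosen so that it absorbs the number of vertex orderings.
theorem pow_self_mul_rpow_pow_eq {d n m : ℕ} (hd : 0 < d) (hn : 0 < n) (hm : d * n = 2 * m) :
    (n : ℝ) ^ n * ((n : ℝ) ^ (1 / 2 - 1 / d : ℝ)) ^ (2 * m) = n ^ m := by
  have hn' : (0 : ℝ) < n := by exact_mod_cast hn
  have hm' : (d * n : ℝ) = 2 * m := by exact_mod_cast hm
  rw [← Real.rpow_mul_natCast hn'.le, ← Real.rpow_natCast, ← Real.rpow_add hn',
    ← Real.rpow_natCast]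
  congr 1
  push_cast
  rw [← hm', show (m : ℝ) = d * n / 2 by linarith]
  field_simp
  ring

theorem pow_self_mul_pow_le {c : ℝ} {d n m k : ℕ} (hd : 0 < d) (hn : 0 < n) (hm : d * n = 2 * m)
    (hk : (k : ℝ) ≤ c * √d * (n : ℝ) ^ (1 / 2 - 1 / d : ℝ)) :
    (n : ℝ) ^ n * (9 * k / d) ^ (2 * m) ≤ (81 * c ^ 2 * n / d) ^ m := by
  set x : ℝ := (n : ℝ) ^ (1 / 2 - 1 / d : ℝ)
  have hsq : (9 * (c * √d * x) / d) ^ 2 = 81 * c ^ 2 / d * x ^ 2 := by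
    rw [div_pow, mul_pow, mul_pow, mul_pow, Real.sq_sqrt d.cast_nonneg]
    field_simp
    ring
  calc (n : ℝ) ^ n * (9 * k / d) ^ (2 * m)
      ≤ n ^ n * (9 * (c * √d * x) / d) ^ (2 * m) := by gcongr
    _ = (81 * c ^ 2 / d) ^ m * (n ^ n * x ^ (2 * m)) := by
        rw [pow_mul, hsq, mul_pow, ← pow_mul]
        ring
    _ = (81 * c ^ 2 * n / d) ^ m := by
        rw [pow_self_mul_rpow_pow_eq hd hn hm, ← mul_pow, div_mul_eq_mul_div]

theorem ncard_regularGraphs_le_of_forall_hasKQueueLayout {c : ℝ} {d n m k : ℕ} (hd : 0 < d)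
    (hn : 0 < n) (hm : d * n = 2 * m) (hdk : d ≤ k)
    (hk : (k : ℝ) ≤ c * √d * (n : ℝ) ^ (1 / 2 - 1 / d : ℝ))
    (hlayout : ∀ G ∈ regularGraphs (Fin n) d, HasKQueueLayout n G k) :
    ((regularGraphs (Fin n) d).ncard : ℝ) ≤ (81 * c ^ 2 * n / d) ^ m := by
  have hsub : regularGraphs (Fin n) d ⊆ {G | G.edgeSet.ncard = m ∧ HasKQueueLayout n G k} := by
    refine fun G hG ↦ ⟨?_, hlayout G hG⟩
    have hedges := two_mul_ncard_edgeSet_of_mem_regularGraphs hG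
    rw [Nat.card_fin, hm] at hedges
    exact Nat.eq_of_mul_eq_mul_left two_pos hedges
  calc ((regularGraphs (Fin n) d).ncard : ℝ)
      ≤ {G : SimpleGraph (Fin n) | G.edgeSet.ncard = m ∧ HasKQueueLayout n G k}.ncard := by
        exact_mod_cast Set.ncard_le_ncard hsub
    _ ≤ n ^ n * (9 * k / d) ^ (2 * m) := ncard_setOf_hasKQueueLayout_le_pow hd hm hdk
    _ ≤ (81 * c ^ 2 * n / d) ^ m := pow_self_mul_pow_le hd hn hm hk

theorem exists_mem_regularGraphs_not_hasKQueueLayout {d n k : ℕ} (hd : 2 ≤ d) (hdn : 10 * d ≤ n)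
    (he : Even (d * n)) (hn : (n : ℝ) ^ (3 * d ^ 2) < 2 ^ n) (hdk : d ≤ k)
    (hk : (k : ℝ) ≤ 1 / 45 * √d * (n : ℝ) ^ (1 / 2 - 1 / d : ℝ)) :
    ∃ G ∈ regularGraphs (Fin n) d, ¬HasKQueueLayout n G k := by
  by_contra! hlayout
  obtain ⟨m, hm⟩ := he.exists_two_nsmul
  rw [smul_eq_mul] at hm
  have hnm : n ≤ m := by nlinarith
  have hn0 : 0 < n := by omega
  have hupper : ((regularGraphs (Fin n) d).ncard : ℝ) ≤ (1 / 25 * (n / d)) ^ m := by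
    refine (ncard_regularGraphs_le_of_forall_hasKQueueLayout (by omega) hn0 hm hdk hk
      hlayout).trans_eq ?_
    congr 1
    ring
  apply lt_irrefl ((n / (12 * d) : ℝ) ^ m)
  calc (n / (12 * d) : ℝ) ^ m
      ≤ n ^ (3 * d ^ 2) * (regularGraphs (Fin n) d).ncard :=
        div_pow_le_mul_ncard_regularGraphs (by omega) hdn hm
    _ ≤ n ^ (3 * d ^ 2) * (1 / 25 * (n / d)) ^ m := by gcongr
    _ < 2 ^ n * (1 / 25 * (n / d)) ^ m := by gcongr
    _ ≤ 2 ^ m * (1 / 25 * (n / d)) ^ m := by gcongr; norm_num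
    _ = (2 / 25 * (n / d)) ^ m := by rw [← mul_pow]; congr 1; ring
    _ ≤ (1 / 12 * (n / d)) ^ m :=
        pow_le_pow_left₀ (by positivity)
          (mul_le_mul_of_nonneg_right (by norm_num) (by positivity)) m
    _ = (n / (12 * d)) ^ m := by congr 1; ring

section Asymptotics

open Filter

theorem eventually_pow_lt_two_pow (j : ℕ) : ∀ᶠ n : ℕ in atTop, (n : ℝ) ^ j < 2 ^ n := by
  filter_upwards [(tendsto_pow_const_div_const_pow_of_one_lt j one_lt_two).eventually_lt_const
    one_pos] with n hn
  rwa [div_lt_one (by positivity)] at hn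

theorem tendsto_const_mul_rpow_half_sub_inv_atTop {C : ℝ} (hC : 0 < C) {d : ℕ} (hd : 3 ≤ d) :
    Tendsto (fun n : ℕ ↦ C * (n : ℝ) ^ (1 / 2 - 1 / d : ℝ)) atTop atTop := by
  have hexp : (0 : ℝ) < 1 / 2 - 1 / d := by
    have hd' : (3 : ℝ) ≤ d := by exact_mod_cast hd
    exact sub_pos.2 (one_div_lt_one_div_of_lt two_pos (by linarith))
  exact ((tendsto_rpow_atTop hexp).comp tendsto_natCast_atTop_atTop).const_mul_atTop hC

end Asymptotics

/-- There is an absolute constant `c > 0` such that for every `Δ ≥ 3` and all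
sufficiently large `n` with `Δ * n` even, there is a simple `Δ`-regular graph
on `n` vertices whose queue-number is at least `c * √Δ * n ^ (1/2 - 1/Δ)`. -/
theorem exists_regular_graph_large_queueNumber :
    ∃ c : ℝ, 0 < c ∧ ∀ Δ : ℕ, 3 ≤ Δ →
      ∃ N : ℕ, ∀ n : ℕ, N ≤ n → Even (Δ * n) →
        ∃ G : SimpleGraph (Fin n),
          (∀ v, (G.neighborSet v).ncard = Δ) ∧
          ∀ k : ℕ, HasKQueueLayout n G k →
            c * Real.sqrt Δ * (n : ℝ) ^ ((1 : ℝ) / 2 - 1 / (Δ : ℝ)) ≤ (k : ℝ) := by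
  refine ⟨1 / 45, by norm_num, fun Δ hΔ ↦ ?_⟩
  have hlarge := tendsto_const_mul_rpow_half_sub_inv_atTop
    (show (0 : ℝ) < 1 / 45 * √Δ by positivity) hΔ
  obtain ⟨N, hN⟩ := Filter.eventually_atTop.1 <| (Filter.eventually_ge_atTop (10 * Δ)).and <|
    (eventually_pow_lt_two_pow (3 * Δ ^ 2)).and (hlarge.eventually_ge_atTop (Δ : ℝ))
  refine ⟨N, fun n hn he ↦ ?_⟩
  obtain ⟨hΔn, hpow, hΔB⟩ := hN n hn
  obtain ⟨G, hG, hlayout⟩ := exists_mem_regularGraphs_not_hasKQueueLayout (by omega) hΔn he hpow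
    (Nat.le_floor hΔB) (Nat.floor_le (Δ.cast_nonneg.trans hΔB))
  refine ⟨G, hG, fun k hk ↦ ?_⟩
  by_contra! hkB
  exact hlayout (hk.mono (Nat.le_floor hkB.le))
end

section
/- An ordered graph G is a k-queue if and only if G contains no rainbow consisting of k+1 edges. -/
/-!
An edge `(v, w)` encloses an edge `(x, y)` when `v < x` and `y < w`. This is a strict order whose
chains are the rainbows and whose antichains are the queues, so the theorem is an instance of
Mirsky's theorem, the dual of Dilworth's: a set has no chain of `k + 1` elements if and only if it
splits into `k` antichains. A chain meets an antichain at most once, which bounds the size of a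
chain by the number of antichains. Conversely, rank each element by the largest size of a chain
strictly preceding it: comparable elements have different ranks, so the level sets of the rank are
antichains, and adding the element itself to such a chain shows that its rank is less than `k`.
-/

/-- Two edges `(v,w)` and `(x,y)` (each with first coordinate ≤ second) of an
ordered graph are nested (one is nested inside the other). -/
def Nested (e f : ℕ × ℕ) : Prop :=
  (e.1 < f.1 ∧ f.2 < e.2) ∨ (f.1 < e.1 ∧ e.2 < f.2)

/-- `E` is the edge set of an ordered graph on the vertex set `{1, …, n}`:
each edge is a pair `(v,w)` with `1 ≤ v ≤ w ≤ n` (loops allowed, no parallel edges). -/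
def IsOrderedGraph (n : ℕ) (E : Finset (ℕ × ℕ)) : Prop :=
  ∀ e ∈ E, 1 ≤ e.1 ∧ e.1 ≤ e.2 ∧ e.2 ≤ n

/-- An edge set is a queue if no two of its edges are nested. -/
def IsQueue (E : Finset (ℕ × ℕ)) : Prop :=
  ∀ e ∈ E, ∀ f ∈ E, ¬ Nested e f

/-- An edge set is a `k`-queue if it can be partitioned into at most `k` parts,
each of which is a queue. -/
def IsKQueue (k : ℕ) (E : Finset (ℕ × ℕ)) : Prop :=
  ∃ parts : Fin k → Finset (ℕ × ℕ),
    (∀ e ∈ E, ∃ i, e ∈ parts i) ∧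
    (∀ i, parts i ⊆ E) ∧
    (∀ i j, i ≠ j → Disjoint (parts i) (parts j)) ∧
    (∀ i, IsQueue (parts i))

section Mirsky

variable {α : Type*} {r : α → α → Prop} {s t : Set α} {a b : α}

lemma natCast_le_chainHeight_iff {n : ℕ} :
    n ≤ s.chainHeight r ↔ ∃ R : Finset α, ↑R ⊆ s ∧ R.card = n ∧ IsChain r (R : Set α) := by
  constructor
  · intro hn
    obtain ⟨R, hRs, hcard, hR⟩ := Set.exists_isChain_of_le_chainHeight n hn
    lift R to Finset α using Set.finite_of_encard_eq_coe hcard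
    rw [Set.encard_coe_eq_coe_finsetCard] at hcard
    exact ⟨R, hRs, by exact_mod_cast hcard, hR⟩
  · rintro ⟨R, hRs, rfl, hR⟩
    rw [← Set.encard_coe_eq_coe_finsetCard]
    exact Set.encard_le_chainHeight_of_isChain s R hRs hR

lemma chainHeight_le_of_antichain_coloring {k : ℕ} {c : α → ℕ} (hck : s.MapsTo c (Set.Iio k))
    (hc : ∀ i, IsAntichain r {a ∈ s | c a = i}) : s.chainHeight r ≤ k := by
  refine iSup_le fun ⟨t, hts, ht⟩ ↦ ?_
  have hinj : t.InjOn c := fun a ha b hb hab ↦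
    inter_subsingleton_of_isChain_of_isAntichain ht (hc (c b))
      ⟨ha, hts ha, hab⟩ ⟨hb, hts hb, rfl⟩
  calc t.encard
    _ ≤ (Set.Iio k).encard := Set.encard_le_encard_of_injOn (hck.mono_left hts) hinj
    _ = k := by simp [← Finset.coe_Iio]

lemma chainHeight_add_one_le_of_forall_rel [Std.Irrefl r] (hts : t ⊆ s) (ha : a ∈ s)
    (hta : ∀ b ∈ t, r b a) : t.chainHeight r + 1 ≤ s.chainHeight r := by
  have : Nonempty {C : Set α // C ⊆ t ∧ IsChain r C} := ⟨∅, by simp⟩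
  rw [t.chainHeight_eq_iSup, ENat.iSup_add]
  refine iSup_le fun ⟨C, hCt, hC⟩ ↦ ?_
  have haC : a ∉ C := fun h ↦ irrefl a (hta a (hCt h))
  rw [← Set.encard_insert_of_notMem haC]
  exact Set.encard_le_chainHeight_of_isChain _ _ (Set.insert_subset ha (hCt.trans hts))
    (hC.insert fun b hb _ ↦ .inr (hta b (hCt hb)))

/-- The rank of `a` in `s`: the largest size of a chain in `s` all of whose elements strictly
precede `a`. As `a` itself is not counted, ranks start at `0`. -/
noncomputable def chainRank (r : α → α → Prop) (s : Set α) (a : α) : ℕ∞ :=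
  {b ∈ s | r b a}.chainHeight r

lemma chainRank_add_one_le_chainHeight [Std.Irrefl r] (ha : a ∈ s) :
    chainRank r s a + 1 ≤ s.chainHeight r :=
  chainHeight_add_one_le_of_forall_rel (Set.sep_subset _ _) ha fun _ hb ↦ hb.2

lemma chainRank_add_one_le_chainRank [IsStrictOrder α r] (ha : a ∈ s) (hab : r a b) :
    chainRank r s a + 1 ≤ chainRank r s b :=
  chainHeight_add_one_le_of_forall_rel (fun _ hc ↦ ⟨hc.1, _root_.trans hc.2 hab⟩) ⟨ha, hab⟩
    fun _ hc ↦ hc.2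

lemma isAntichain_chainRank_eq [IsStrictOrder α r] (s : Set α) (i : ℕ) :
    IsAntichain r {a ∈ s | chainRank r s a = i} := by
  rintro a ⟨ha, hai⟩ b ⟨-, hbi⟩ - hab
  have hlt := chainRank_add_one_le_chainRank ha hab
  rw [hai, hbi] at hlt
  exact i.lt_succ_self.not_ge (by exact_mod_cast hlt)

/-- Mirsky's theorem. -/
theorem chainHeight_le_iff_exists_antichain_coloring [IsStrictOrder α r] {k : ℕ} :
    s.chainHeight r ≤ k ↔
      ∃ c : α → ℕ, s.MapsTo c (Set.Iio k) ∧ ∀ i, IsAntichain r {a ∈ s | c a = i} := by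
  refine ⟨fun hs ↦ ?_, fun ⟨c, hck, hc⟩ ↦ chainHeight_le_of_antichain_coloring hck hc⟩
  have hrank : ∀ a ∈ s, ∃ i < k, chainRank r s a = i := by
    intro a ha
    have hlt : chainRank r s a < k :=
      ENat.add_one_le_natCast_iff.1 ((chainRank_add_one_le_chainHeight ha).trans hs)
    lift chainRank r s a to ℕ using hlt.ne_top with i
    exact ⟨i, by exact_mod_cast hlt, rfl⟩
  choose! c hck hc using hrank
  refine ⟨c, hck, fun i ↦ (isAntichain_chainRank_eq s i).subset ?_⟩
  rintro a ⟨ha, rfl⟩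
  exact ⟨ha, hc a ha⟩

end Mirsky

section Queues

/-- The strict order underlying nesting: `e` is the outer edge and `f` the inner one. -/
def Encloses (e f : ℕ × ℕ) : Prop :=
  e.1 < f.1 ∧ f.2 < e.2

instance : IsStrictOrder (ℕ × ℕ) Encloses where
  irrefl _ he := he.1.false
  trans _ _ _ hef hfg := ⟨hef.1.trans hfg.1, hfg.2.trans hef.2⟩

lemma nested_iff_encloses {e f : ℕ × ℕ} : Nested e f ↔ Encloses e f ∨ Encloses f e :=
  Iff.rfl

lemma isChain_encloses_iff {R : Set (ℕ × ℕ)} :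
    IsChain Encloses R ↔ ∀ e ∈ R, ∀ f ∈ R, e ≠ f → Nested e f :=
  Iff.rfl

lemma isQueue_iff_isAntichain {E : Finset (ℕ × ℕ)} :
    IsQueue E ↔ IsAntichain Encloses (E : Set (ℕ × ℕ)) := by
  refine ⟨fun hE e he f hf _ hef ↦ hE e he f hf (.inl hef), fun hE e he f hf hef ↦ ?_⟩
  rcases nested_iff_encloses.1 hef with hef | hfe
  · exact hE he hf (ne_of_irrefl hef) hef
  · exact hE hf he (ne_of_irrefl hfe) hfe

lemma isKQueue_iff_exists_antichain_coloring {k : ℕ} {E : Finset (ℕ × ℕ)} :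
    IsKQueue k E ↔ ∃ c : ℕ × ℕ → ℕ, Set.MapsTo c E (Set.Iio k) ∧
      ∀ i, IsAntichain Encloses {e ∈ (E : Set (ℕ × ℕ)) | c e = i} := by
  constructor
  · rintro ⟨parts, hcover, -, -, hqueue⟩
    have hindex : ∀ e ∈ E, ∃ i, ∃ hi : i < k, e ∈ parts ⟨i, hi⟩ := fun e he ↦
      Fin.exists_iff.1 (hcover e he)
    choose! c hck hc using hindex
    refine ⟨c, hck, ?_⟩
    rintro _ e ⟨he, rfl⟩ f ⟨hf, hfe⟩ - hef
    have hfe' : f ∈ parts ⟨c e, hck e he⟩ := by simpa only [hfe] using hc f hf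
    exact hqueue _ e (hc e he) f hfe' (nested_iff_encloses.2 (.inl hef))
  · rintro ⟨c, hck, hc⟩
    refine ⟨fun i ↦ {e ∈ E | c e = i}, fun e he ↦ ⟨⟨c e, hck he⟩, by simp [he]⟩,
      fun i ↦ Finset.filter_subset _ _, fun i j hij ↦ ?_, fun i ↦ ?_⟩
    · exact Finset.disjoint_filter.2 fun _ _ hi hj ↦ hij (Fin.ext (hi.symm.trans hj))
    · simpa [isQueue_iff_isAntichain] using hc i

theorem isKQueue_iff_no_rainbow_general (k : ℕ) (E : Finset (ℕ × ℕ)) :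
    IsKQueue k E ↔
      ¬ ∃ R : Finset (ℕ × ℕ), R ⊆ E ∧ R.card = k + 1 ∧
        ∀ e ∈ R, ∀ f ∈ R, e ≠ f → Nested e f := by
  calc IsKQueue k E
    _ ↔ (E : Set (ℕ × ℕ)).chainHeight Encloses ≤ k := by
      rw [isKQueue_iff_exists_antichain_coloring, chainHeight_le_iff_exists_antichain_coloring]
    _ ↔ ¬ ((k + 1 : ℕ) ≤ (E : Set (ℕ × ℕ)).chainHeight Encloses) := by
      rw [Nat.cast_add_one, ENat.natCast_add_one_le_iff, not_lt]
    _ ↔ _ := by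
      simp only [natCast_le_chainHeight_iff, isChain_encloses_iff, Finset.coe_subset,
        Finset.mem_coe]

end Queues

/-- An ordered graph `G` is a `k`-queue if and only if `G` contains no rainbow
(set of pairwise nested edges) consisting of `k + 1` edges. -/
theorem isKQueue_iff_no_rainbow (n k : ℕ) (E : Finset (ℕ × ℕ))
    (hE : IsOrderedGraph n E) :
    IsKQueue k E ↔
      ¬ ∃ R : Finset (ℕ × ℕ), R ⊆ E ∧ R.card = k + 1 ∧
        ∀ e ∈ R, ∀ f ∈ R, e ≠ f → Nested e f :=
  isKQueue_iff_no_rainbow_general k E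
end

section
/- Let g(n) denote the number of queues on the vertex set {1,…,n}. Then for every positive integer n, g(2n) ≤ 11^(2n−1) · g(n). -/
/-- `queueCount n` is the number `g(n)` of queues on the vertex set `{1, …, n}`,
i.e. the number of edge sets `E ⊆ {(v,w) : 1 ≤ v ≤ w ≤ n}` with no two nested edges. -/
noncomputable def queueCount (n : ℕ) : ℕ :=
  {E : Finset (ℕ × ℕ) | IsOrderedGraph n E ∧ IsQueue E}.ncard

/-!
Merge the vertices `2i - 1` and `2i` of `{1, …, 2n}` into a single vertex `i`. Monotone vertex maps
reflect nesting, so a queue contracts to a queue `H` on `{1, …, n}`, and it remains to show that at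
most `11 ^ (2n - 1)` queues contract to a given `H`. Two edges of a queue with the same endpoint sum
coincide, so `H` has at most `2n - 1` edges. A queue is determined by its traces on the four
potential edges above each edge `(a, b)` of `H`. Such a trace is nonempty and does not contain both
of `(2a - 1, 2b)` and `(2a, 2b - 1)`, which are nested; this leaves `2⁴ - 2² - 1 = 11` traces.
-/

open Finset

section Counting

variable {α β : Type*}

theorem card_filter_nonempty_and_not_subset [DecidableEq α] {s t : Finset α} (hst : s ⊆ t)
    (hs : s.Nonempty) :
    #{S ∈ t.powerset | S.Nonempty ∧ ¬ s ⊆ S} = 2 ^ #t - 2 ^ (#t - #s) - 1 := by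
  have filter_eq : {S ∈ t.powerset | S.Nonempty ∧ ¬ s ⊆ S} = (t.powerset \ Icc s t).erase ∅ := by
    ext S
    simp only [mem_filter, mem_erase, mem_sdiff, mem_powerset, mem_Icc, nonempty_iff_ne_empty]
    tauto
  have empty_mem : ∅ ∈ t.powerset \ Icc s t := by
    simp [hs.ne_empty]
  have Icc_subset : Icc s t ⊆ t.powerset := fun S hS => mem_powerset.2 (mem_Icc.1 hS).2
  rw [filter_eq, card_erase_of_mem empty_mem, card_sdiff_of_subset Icc_subset, card_powerset,
    card_Icc_finset hst]

theorem card_le_prod_card_of_fiber_mem [DecidableEq β] {g : α → β} {H : Finset β}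
    {𝓔 : Finset (Finset α)} {T : β → Finset (Finset α)} (hg : ∀ E ∈ 𝓔, ∀ e ∈ E, g e ∈ H)
    (hT : ∀ E ∈ 𝓔, ∀ h ∈ H, {e ∈ E | g e = h} ∈ T h) : #𝓔 ≤ ∏ h ∈ H, #(T h) := by
  classical
  rw [← card_pi]
  refine card_le_card_of_injOn (fun E h _ => {e ∈ E | g e = h})
    (fun E hE => mem_pi.2 (hT E hE)) fun E hE F hF hEF => ?_
  calc E = H.biUnion fun h => {e ∈ E | g e = h} := (biUnion_filter_eq_of_maps_to (hg E hE)).symm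
    _ = H.biUnion fun h => {e ∈ F | g e = h} :=
        biUnion_congr rfl fun h hh => congrFun (congrFun hEF h) hh
    _ = F := biUnion_filter_eq_of_maps_to (hg F hF)

end Counting

section VertexMap

variable {φ : ℕ → ℕ} {E : Finset (ℕ × ℕ)}

theorem Nested.of_map (hφ : Monotone φ) {e f : ℕ × ℕ}
    (h : Nested (Prod.map φ φ e) (Prod.map φ φ f)) : Nested e f :=
  h.imp (And.imp hφ.reflect_lt hφ.reflect_lt) (And.imp hφ.reflect_lt hφ.reflect_lt)

theorem IsQueue.image_map (hφ : Monotone φ) (hE : IsQueue E) :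
    IsQueue (E.image (Prod.map φ φ)) := by
  simp only [IsQueue, forall_mem_image]
  exact fun e he f hf h => hE e he f hf (h.of_map hφ)

theorem IsOrderedGraph.image_map {m n : ℕ} (hφ : Monotone φ) (h_one : 1 ≤ φ 1) (hmn : φ m ≤ n)
    (hE : IsOrderedGraph m E) : IsOrderedGraph n (E.image (Prod.map φ φ)) := by
  simp only [IsOrderedGraph, forall_mem_image]
  intro e he
  obtain ⟨h1, hle, hm⟩ := hE e he
  exact ⟨h_one.trans (hφ h1), hφ hle, (hφ hm).trans hmn⟩

end VertexMap

section EdgeBound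

variable {E : Finset (ℕ × ℕ)}

theorem IsQueue.injOn_add (hE : IsQueue E) : Set.InjOn (fun e : ℕ × ℕ => e.1 + e.2) E := by
  intro e he f hf (hsum : e.1 + e.2 = f.1 + f.2)
  have not_nested := hE e he f hf
  simp only [Nested] at not_nested
  ext <;> omega

theorem IsQueue.card_le_two_mul_sub_one {n : ℕ} (hE : IsQueue E) (hG : IsOrderedGraph n E) :
    #E ≤ 2 * n - 1 := by
  have mapsTo : Set.MapsTo (fun e : ℕ × ℕ => e.1 + e.2) E (Icc 2 (2 * n)) := by
    intro e he
    obtain ⟨h1, hle, hn⟩ := hG e he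
    simp only [coe_Icc, Set.mem_Icc]
    omega
  calc #E ≤ #(Icc 2 (2 * n)) := card_le_card_of_injOn _ mapsTo hE.injOn_add
    _ = 2 * n - 1 := by rw [Nat.card_Icc]; omega

end EdgeBound

section Contraction

/-- The vertex map merging `2i - 1` and `2i` into `i`. -/
def mergePairs (v : ℕ) : ℕ := (v + 1) / 2

theorem monotone_mergePairs : Monotone mergePairs :=
  fun _ _ h => Nat.div_le_div_right (Nat.succ_le_succ h)

/-- The map induced on edges by `mergePairs`. -/
def contract : ℕ × ℕ → ℕ × ℕ := Prod.map mergePairs mergePairs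

/-- The pairs contracting to `h`; there are four of them when both entries of `h` are positive. -/
def block (h : ℕ × ℕ) : Finset (ℕ × ℕ) :=
  Icc (2 * h.1 - 1) (2 * h.1) ×ˢ Icc (2 * h.2 - 1) (2 * h.2)

/-- The two members of `block h` of which one is nested inside the other. -/
def nestedPair (h : ℕ × ℕ) : Finset (ℕ × ℕ) :=
  {(2 * h.1 - 1, 2 * h.2), (2 * h.1, 2 * h.2 - 1)}

/-- The candidates for the trace on `block h` of a queue whose contraction contains `h`. -/
def blockTraces (h : ℕ × ℕ) : Finset (Finset (ℕ × ℕ)) :=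
  {S ∈ (block h).powerset | S.Nonempty ∧ ¬ nestedPair h ⊆ S}

variable {h : ℕ × ℕ}

theorem mem_block {e : ℕ × ℕ} : e ∈ block h ↔ contract e = h := by
  simp only [block, contract, mergePairs, mem_product, mem_Icc, Prod.ext_iff, Prod.map_fst,
    Prod.map_snd]
  omega

theorem card_block (h₁ : 1 ≤ h.1) (h₂ : 1 ≤ h.2) : #(block h) = 4 := by
  have card_Icc_pair {a : ℕ} (ha : 1 ≤ a) : #(Icc (2 * a - 1) (2 * a)) = 2 := by
    rw [Nat.card_Icc]; omega
  rw [block, card_product, card_Icc_pair h₁, card_Icc_pair h₂]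

theorem nestedPair_subset_block (h : ℕ × ℕ) : nestedPair h ⊆ block h := by
  simp [nestedPair, block, insert_subset_iff]

theorem card_nestedPair (h₁ : 1 ≤ h.1) : #(nestedPair h) = 2 :=
  card_pair fun heq => by
    have := congrArg Prod.fst heq
    dsimp only at this
    omega

theorem card_blockTraces (h₁ : 1 ≤ h.1) (h₂ : 1 ≤ h.2) : #(blockTraces h) = 11 := by
  rw [blockTraces,
    card_filter_nonempty_and_not_subset (nestedPair_subset_block h) (insert_nonempty _ _),
    card_block h₁ h₂, card_nestedPair h₁]
  norm_num

theorem IsQueue.not_nestedPair_subset {E : Finset (ℕ × ℕ)} (hE : IsQueue E) (h₁ : 1 ≤ h.1)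
    (h₂ : 1 ≤ h.2) : ¬ nestedPair h ⊆ E := by
  simp only [nestedPair, insert_subset_iff, singleton_subset_iff]
  rintro ⟨outer_mem, inner_mem⟩
  exact hE _ outer_mem _ inner_mem (Or.inl ⟨by dsimp only; omega, by dsimp only; omega⟩)

theorem IsQueue.filter_contract_mem_blockTraces {E : Finset (ℕ × ℕ)} (hE : IsQueue E)
    (h₁ : 1 ≤ h.1) (h₂ : 1 ≤ h.2) (hh : h ∈ E.image contract) :
    {e ∈ E | contract e = h} ∈ blockTraces h := by
  refine mem_filter.2 ⟨mem_powerset.2 fun e he => mem_block.2 (mem_filter.1 he).2, ?_, ?_⟩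
  · exact fiber_nonempty_iff_mem_image.2 hh
  · exact fun hsub => hE.not_nestedPair_subset h₁ h₂ (hsub.trans (filter_subset _ _))

theorem card_le_pow_of_image_contract_eq {H : Finset (ℕ × ℕ)} {𝓔 : Finset (Finset (ℕ × ℕ))}
    (hH : ∀ h ∈ H, 1 ≤ h.1 ∧ 1 ≤ h.2) (h𝓔 : ∀ E ∈ 𝓔, IsQueue E ∧ E.image contract = H) :
    #𝓔 ≤ 11 ^ #H := by
  calc #𝓔 ≤ ∏ h ∈ H, #(blockTraces h) := by
        refine card_le_prod_card_of_fiber_mem (g := contract) (fun E hE e he => ?_)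
          fun E hE h hh => ?_
        · exact (h𝓔 E hE).2 ▸ mem_image_of_mem contract he
        · exact (h𝓔 E hE).1.filter_contract_mem_blockTraces (hH h hh).1 (hH h hh).2
            ((h𝓔 E hE).2.symm ▸ hh)
    _ = 11 ^ #H := prod_eq_pow_card fun h hh => card_blockTraces (hH h hh).1 (hH h hh).2

end Contraction

section Queues

open Classical in
/-- The queues on `{1, …, n}`, selected from the subsets of `{1, …, n}²` so as to form a
`Finset`. -/
noncomputable def queues (n : ℕ) : Finset (Finset (ℕ × ℕ)) :=
  {E ∈ (Icc 1 n ×ˢ Icc 1 n).powerset | IsOrderedGraph n E ∧ IsQueue E}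

variable {n : ℕ} {E : Finset (ℕ × ℕ)}

theorem IsOrderedGraph.subset_product (hE : IsOrderedGraph n E) : E ⊆ Icc 1 n ×ˢ Icc 1 n := by
  intro e he
  obtain ⟨h1, hle, hn⟩ := hE e he
  exact mem_product.2 ⟨mem_Icc.2 ⟨h1, hle.trans hn⟩, mem_Icc.2 ⟨h1.trans hle, hn⟩⟩

theorem mem_queues : E ∈ queues n ↔ IsOrderedGraph n E ∧ IsQueue E := by
  simp only [queues, mem_filter, mem_powerset, and_iff_right_iff_imp]
  exact fun hE => hE.1.subset_product

theorem queueCount_eq_card_queues (n : ℕ) : queueCount n = #(queues n) := by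
  rw [queueCount, ← Set.ncard_coe_finset]
  congr 1
  ext E
  exact mem_queues.symm

theorem image_contract_mem_queues (hE : E ∈ queues (2 * n)) : E.image contract ∈ queues n := by
  obtain ⟨hG, hQ⟩ := mem_queues.1 hE
  have mergePairs_two_mul : mergePairs (2 * n) ≤ n := by
    simp only [mergePairs]; omega
  exact mem_queues.2 ⟨hG.image_map monotone_mergePairs le_rfl mergePairs_two_mul,
    hQ.image_map monotone_mergePairs⟩

end Queues

/-- For every positive integer `n`, `g(2n) ≤ 11 ^ (2n - 1) * g(n)`. -/
theorem queueCount_two_mul_le (n : ℕ) (hn : 0 < n) :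
    queueCount (2 * n) ≤ 11 ^ (2 * n - 1) * queueCount n := by
  rw [queueCount_eq_card_queues, queueCount_eq_card_queues]
  refine card_le_mul_card_image_of_maps_to (f := image contract)
    (fun E hE => image_contract_mem_queues hE) _ fun H hH => ?_
  obtain ⟨hG, hQ⟩ := mem_queues.1 hH
  have one_le : ∀ h ∈ H, 1 ≤ h.1 ∧ 1 ≤ h.2 := fun h hh =>
    ⟨(hG h hh).1, (hG h hh).1.trans (hG h hh).2.1⟩
  calc #{E ∈ queues (2 * n) | E.image contract = H} ≤ 11 ^ #H :=
        card_le_pow_of_image_contract_eq one_le fun E hE =>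
          ⟨(mem_queues.1 (mem_filter.1 hE).1).2, (mem_filter.1 hE).2⟩
    _ ≤ 11 ^ (2 * n - 1) :=
        Nat.pow_le_pow_right (by norm_num) (hQ.card_le_two_mul_sub_one hG)
end

section
/- There is an absolute constant c > 0 such that, letting g(n,m) denote the number of queues on the vertex set {1,…,n} having exactly m edges: if m ≤ n/2 then g(n,m) ≤ C(n, 2m) · c^(2m) (where C(n,2m) is the binomial coefficient), and for all m one has g(n,m) ≤ c^n. -/
/-- `queueCountE n m` is the number `g(n,m)` of queues on the vertex set
`{1, …, n}` having exactly `m` edges. -/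
noncomputable def queueCountE (n m : ℕ) : ℕ :=
  {E : Finset (ℕ × ℕ) | IsOrderedGraph n E ∧ IsQueue E ∧ E.card = m}.ncard

open Finset

section ProductChains

variable {α β : Type*}

open Classical in
/-- The chains for the coordinatewise order contained in the grid `s ×ˢ t`. The queues with all
endpoints in `V` are the members of `productChains V V`; allowing two different sides makes the
count accessible to induction. -/
noncomputable def productChains [LE α] [LE β] (s : Finset α) (t : Finset β) :
    Finset (Finset (α × β)) :=
  {C ∈ (s ×ˢ t).powerset | IsChain (· ≤ ·) (C : Set (α × β))}

lemma mem_productChains [LE α] [LE β] {s : Finset α} {t : Finset β} {C : Finset (α × β)} :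
    C ∈ productChains s t ↔ C ⊆ s ×ˢ t ∧ IsChain (· ≤ ·) (C : Set (α × β)) := by
  simp [productChains]

lemma productChains_empty_left [LE α] [LE β] (t : Finset β) :
    productChains (∅ : Finset α) t = {∅} := by
  ext C
  simp +contextual [mem_productChains, subset_empty]

lemma productChains_empty_right [LE α] [LE β] (s : Finset α) :
    productChains s (∅ : Finset β) = {∅} := by
  ext C
  simp +contextual [mem_productChains, subset_empty]

variable [LinearOrder α] [LinearOrder β] {s : Finset α} {t : Finset β} {a : α} {b : β}

lemma fst_ne_or_snd_ne_of_mem_productChains_insert (ha : ∀ x ∈ s, x < a) (hb : ∀ y ∈ t, y < b)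
    {C : Finset (α × β)} (hC : C ∈ productChains (insert a s) (insert b t)) :
    (∀ e ∈ C.erase (a, b), e.1 ≠ a) ∨ ∀ e ∈ C.erase (a, b), e.2 ≠ b := by
  obtain ⟨hsub, hchain⟩ := mem_productChains.1 hC
  by_contra! ⟨⟨⟨_, y⟩, hay, rfl⟩, ⟨⟨x, _⟩, hxb, rfl⟩⟩
  rw [mem_erase] at hay hxb
  have hy : y ∈ t := (mem_insert.1 (mem_product.1 (hsub hay.2)).2).resolve_left (by grind)
  have hx : x ∈ s := (mem_insert.1 (mem_product.1 (hsub hxb.2)).1).resolve_left (by grind)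
  rcases hchain.total hxb.2 hay.2 with h | h
  · exact (hb y hy).not_ge h.2
  · exact (ha x hx).not_ge h.1

lemma erase_mem_productChains_union (ha : ∀ x ∈ s, x < a) (hb : ∀ y ∈ t, y < b)
    {C : Finset (α × β)} (hC : C ∈ productChains (insert a s) (insert b t)) :
    C.erase (a, b) ∈ productChains s (insert b t) ∪ productChains (insert a s) t := by
  obtain ⟨hsub, hchain⟩ := mem_productChains.1 hC
  have hsub' : C.erase (a, b) ⊆ insert a s ×ˢ insert b t := (erase_subset _ _).trans hsub
  have hchain' : IsChain (· ≤ ·) (C.erase (a, b) : Set (α × β)) :=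
    hchain.mono (coe_subset.2 (erase_subset _ _))
  rw [mem_union, mem_productChains, mem_productChains]
  rcases fst_ne_or_snd_ne_of_mem_productChains_insert ha hb hC with hfst | hsnd
  · refine .inl ⟨fun e he ↦ ?_, hchain'⟩
    obtain ⟨h₁, h₂⟩ := mem_product.1 (hsub' he)
    exact mem_product.2 ⟨(mem_insert.1 h₁).resolve_left (hfst e he), h₂⟩
  · refine .inr ⟨fun e he ↦ ?_, hchain'⟩
    obtain ⟨h₁, h₂⟩ := mem_product.1 (hsub' he)
    exact mem_product.2 ⟨h₁, (mem_insert.1 h₂).resolve_left (hsnd e he)⟩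

lemma card_productChains_insert_le (ha : ∀ x ∈ s, x < a) (hb : ∀ y ∈ t, y < b) :
    #(productChains (insert a s) (insert b t)) ≤
      2 * (#(productChains s (insert b t)) + #(productChains (insert a s) t)) := by
  set U := productChains s (insert b t) ∪ productChains (insert a s) t
  have hcover : productChains (insert a s) (insert b t) ⊆ U ∪ U.image (insert (a, b)) := by
    intro C hC
    have hU : C.erase (a, b) ∈ U := erase_mem_productChains_union ha hb hC
    by_cases hab : (a, b) ∈ C
    · exact mem_union_right _ (insert_erase hab ▸ mem_image_of_mem (insert (a, b)) hU)
    · exact mem_union_left _ (by rwa [erase_eq_of_notMem hab] at hU)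
  calc #(productChains (insert a s) (insert b t))
      ≤ #U + #(U.image (insert (a, b))) := (card_le_card hcover).trans (card_union_le _ _)
    _ ≤ #U + #U := Nat.add_le_add_left card_image_le _
    _ = 2 * #U := (two_mul _).symm
    _ ≤ 2 * (#(productChains s (insert b t)) + #(productChains (insert a s) t)) :=
      Nat.mul_le_mul_left 2 (card_union_le _ _)

theorem card_productChains_le (s : Finset α) (t : Finset β) :
    #(productChains s t) ≤ 4 ^ (#s + #t) := by
  induction s using Finset.induction_on_max generalizing t with
  | empty => simpa [productChains_empty_left] using Nat.one_le_pow _ _ (by norm_num)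
  | insert a s ha ihs =>
    induction t using Finset.induction_on_max with
    | empty => simpa [productChains_empty_right] using Nat.one_le_pow _ _ (by norm_num)
    | insert b t hb iht =>
      have hs : #(insert a s) = #s + 1 := card_insert_of_notMem fun h ↦ (ha a h).false
      have ht : #(insert b t) = #t + 1 := card_insert_of_notMem fun h ↦ (hb b h).false
      calc #(productChains (insert a s) (insert b t))
          ≤ 2 * (#(productChains s (insert b t)) + #(productChains (insert a s) t)) :=
            card_productChains_insert_le ha hb
        _ ≤ 2 * (4 ^ (#s + #(insert b t)) + 4 ^ (#(insert a s) + #t)) := by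
            gcongr
            exact ihs _
        _ = 4 ^ (#(insert a s) + #(insert b t)) := by rw [hs, ht]; ring

end ProductChains

section Endpoints

variable {α : Type*} [DecidableEq α]

/-- The endpoints of the edges of `E`, i.e. the non-isolated vertices of the graph with edge set
`E`: the least vertex set on which `E` lives. -/
def edgeEndpoints (E : Finset (α × α)) : Finset α := E.image Prod.fst ∪ E.image Prod.snd

lemma subset_edgeEndpoints_product (E : Finset (α × α)) :
    E ⊆ edgeEndpoints E ×ˢ edgeEndpoints E :=
  subset_product.trans (product_subset_product subset_union_left subset_union_right)

lemma card_edgeEndpoints_le (E : Finset (α × α)) : #(edgeEndpoints E) ≤ 2 * #E :=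
  calc #(edgeEndpoints E) ≤ #(E.image Prod.fst) + #(E.image Prod.snd) := card_union_le _ _
    _ ≤ #E + #E := add_le_add card_image_le card_image_le
    _ = 2 * #E := (two_mul _).symm

end Endpoints

lemma IsOrderedGraph.edgeEndpoints_subset {n : ℕ} {E : Finset (ℕ × ℕ)}
    (hE : IsOrderedGraph n E) : edgeEndpoints E ⊆ Icc 1 n := by
  refine union_subset (image_subset_iff.2 fun e he ↦ ?_) (image_subset_iff.2 fun e he ↦ ?_) <;>
  · obtain ⟨h₁, h₂, h₃⟩ := hE e he
    exact mem_Icc.2 (by omega)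

lemma isQueue_iff_isChain {E : Finset (ℕ × ℕ)} :
    IsQueue E ↔ IsChain (· ≤ ·) (E : Set (ℕ × ℕ)) := by
  have comparable_iff (e f : ℕ × ℕ) : ¬ Nested e f ↔ e ≤ f ∨ f ≤ e := by
    simp only [Nested, Prod.le_def]
    omega
  simp only [IsQueue, comparable_iff]
  exact ⟨fun h e he f hf _ ↦ h e he f hf, fun h e he f hf ↦ h.total he hf⟩

lemma IsQueue.exists_mem_productChains {n m k : ℕ} (hmk : min (2 * m) n ≤ k) (hkn : k ≤ n)
    {E : Finset (ℕ × ℕ)} (hE : IsQueue E) (hG : IsOrderedGraph n E) (hcard : #E = m) :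
    ∃ V ∈ (Icc 1 n).powersetCard k, E ∈ productChains V V := by
  have hsub : edgeEndpoints E ⊆ Icc 1 n := hG.edgeEndpoints_subset
  have hle : #(edgeEndpoints E) ≤ k := by
    refine (le_min ?_ ?_).trans hmk
    · exact hcard ▸ card_edgeEndpoints_le E
    · simpa using card_le_card hsub
  obtain ⟨V, hEV, hVn, hV⟩ := exists_subsuperset_card_eq hsub hle (by simpa using hkn)
  exact ⟨V, mem_powersetCard.2 ⟨hVn, hV⟩, mem_productChains.2
    ⟨(subset_edgeEndpoints_product E).trans (product_subset_product hEV hEV),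
      isQueue_iff_isChain.1 hE⟩⟩

theorem queueCountE_le_choose_mul_pow {n m k : ℕ} (hmk : min (2 * m) n ≤ k) (hkn : k ≤ n) :
    queueCountE n m ≤ n.choose k * 16 ^ k := by
  set T := ((Icc 1 n).powersetCard k).biUnion fun V ↦ productChains V V
  have hcover : {E | IsOrderedGraph n E ∧ IsQueue E ∧ #E = m} ⊆ (T : Set (Finset (ℕ × ℕ))) :=
    fun _ ⟨hG, hQ, hcard⟩ ↦ mem_biUnion.2 (hQ.exists_mem_productChains hmk hkn hG hcard)
  have hchains : ∀ V ∈ (Icc 1 n).powersetCard k, #(productChains V V) ≤ 16 ^ k := by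
    intro V hV
    calc #(productChains V V) ≤ 4 ^ (#V + #V) := card_productChains_le V V
      _ = 16 ^ k := by rw [(mem_powersetCard.1 hV).2, pow_add, ← mul_pow]; norm_num
  calc queueCountE n m ≤ #T :=
        (Set.ncard_le_ncard hcover T.finite_toSet).trans_eq (Set.ncard_coe_finset T)
    _ ≤ #((Icc 1 n).powersetCard k) * 16 ^ k := card_biUnion_le_card_mul _ _ _ hchains
    _ = n.choose k * 16 ^ k := by simp

/-- There is an absolute constant `c > 0` such that: if `m ≤ n / 2` then
`g(n,m) ≤ C(n, 2m) * c ^ (2m)`, and for all `m` one has `g(n,m) ≤ c ^ n`. -/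
theorem queueCountE_le :
    ∃ c : ℕ, 0 < c ∧ ∀ n m : ℕ,
      (2 * m ≤ n → queueCountE n m ≤ n.choose (2 * m) * c ^ (2 * m)) ∧
      queueCountE n m ≤ c ^ n := by
  refine ⟨16, by norm_num, fun n m ↦ ⟨fun hmn ↦ ?_, ?_⟩⟩
  · exact queueCountE_le_choose_mul_pow (min_le_left _ _) hmn
  · simpa using queueCountE_le_choose_mul_pow (min_le_right (2 * m) n) le_rfl
end
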